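/- arXiv:2504.14929 — 7 statements merged into one kernel-verified Lean document; each statement's English description precedes it below -/
import Mathlib

section
/- Let a and b be integers with a > 1 and b > 1, where a is even, b is prime, and b ≡ 3 (mod 8). Then the equation (a^n − 1)(b^n − 1) = x^2 has no solution in positive integers n, x. -/
/-- If the first coordinate of `s` is odd and `d` is odd, every power has odd first coordinate. -/
lemma pell_odd_pow {d : ℤ} (hd : Odd d) (s : Pell.Solution₁ d) (hs : Odd s.x) (k : ℕ) :
    Odd (s ^ k).x := by
  have hy : Even s.y := by
    have h := s.prop
    by_contra hy
    rw [Int.not_even_iff_odd] at hy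
    have h1 : Even (s.x ^ 2 - d * s.y ^ 2) := (hs.pow).sub_odd (hd.mul hy.pow)
    rw [h] at h1
    exact absurd h1 (by decide)
  have key : Odd (s ^ k).x ∧ Even (s ^ k).y := by
    induction k with
    | zero => simp
    | succ k ih =>
      rw [pow_succ, Pell.Solution₁.x_mul, Pell.Solution₁.y_mul]
      refine ⟨(ih.1.mul hs).add_even ((hy.mul_left _).mul_left d), (hy.mul_left _).add (ih.2.mul_right _)⟩
  exact key.1

lemma pell_sq_x {d : ℤ} (s : Pell.Solution₁ d) : (s * s).x = 2 * s.x ^ 2 - 1 := by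
  have h := s.prop
  rw [Pell.Solution₁.x_mul]
  linarith [h]

lemma pell_even_pow {d : ℤ} (s : Pell.Solution₁ d) (hs : Even s.x) (k : ℕ)
    (hk : Odd (s ^ k).x) : ∃ w : ℤ, (s ^ k).x = 2 * w ^ 2 - 1 := by
  rcases Nat.even_or_odd' k with ⟨j, rfl | rfl⟩
  · refine ⟨(s ^ j).x, ?_⟩
    rw [two_mul, pow_add, pell_sq_x]
  · exfalso
    rw [pow_succ, two_mul, pow_add, Pell.Solution₁.x_mul, Pell.Solution₁.y_mul] at hk
    rw [← Int.not_even_iff_odd] at hk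
    apply hk
    refine (hs.mul_left _).add (Even.mul_left (Even.mul_right ?_ _) d)
    exact ⟨(s ^ j).x * (s ^ j).y, by ring⟩

lemma split_sq {A B x : ℤ} (hA : 0 < A) (hAB : A * B = x ^ 2) :
    ∃ d y z : ℤ, 0 < d ∧ A = d * y ^ 2 ∧ B = d * z ^ 2 := by
  obtain ⟨d, y, hdy, hd⟩ := Nat.sq_mul_squarefree A.natAbs
  have hA' : A = (d : ℤ) * (y : ℤ) ^ 2 := by
    have : ((A.natAbs : ℕ) : ℤ) = A := Int.natAbs_of_nonneg hA.le
    rw [← this, ← hdy]; push_cast; ring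
  have hd0 : (d : ℤ) ≠ 0 := by rintro h; rw [h] at hA'; simp at hA'; omega
  have hy0 : (y : ℤ) ≠ 0 := by rintro h; rw [h] at hA'; simp at hA'; omega
  have hdvd : (y : ℤ) ^ 2 ∣ x ^ 2 := ⟨d * B, by rw [← hAB, hA']; ring⟩
  rw [Int.pow_dvd_pow_iff (by norm_num)] at hdvd
  obtain ⟨w, rfl⟩ := hdvd
  have h1 : (d : ℤ) * B = w ^ 2 := by
    apply mul_left_cancel₀ (pow_ne_zero 2 hy0)
    rw [hA'] at hAB; linear_combination hAB
  have hsq : Squarefree (d : ℤ) := by rwa [Int.squarefree_natCast]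
  have h2 : (d : ℤ) ∣ w := (hsq.dvd_pow_iff_dvd (by norm_num)).1 ⟨B, h1.symm⟩
  obtain ⟨z, rfl⟩ := h2
  refine ⟨d, y, z, by positivity, hA', ?_⟩
  apply mul_left_cancel₀ hd0
  linear_combination h1

lemma two_nonres {b : ℤ} (hb : 1 < b) (hbprime : Prime b) (hb8 : b % 8 = 3) {w : ℤ}
    (h : b ∣ 2 * w ^ 2 - 1) : False := by
  lift b to ℕ using by omega
  have hp : b.Prime := Nat.prime_iff_prime_int.2 hbprime
  haveI := Fact.mk hp
  have h1 : (((2 * w ^ 2 - 1 : ℤ)) : ZMod b) = 0 := (ZMod.intCast_zmod_eq_zero_iff_dvd _ _).2 h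
  push_cast at h1
  have h2 : IsSquare (2 : ZMod b) := ⟨2 * w, by linear_combination (-2) * h1⟩
  rw [ZMod.exists_sq_eq_two_iff (by omega)] at h2
  omega

theorem stmt_3 (a b : ℤ) (ha : 1 < a) (hb : 1 < b)
    (haeven : Even a) (hbprime : Prime b) (hb8 : b % 8 = 3) :
    ¬ ∃ (n : ℕ) (x : ℤ), 0 < n ∧ 0 < x ∧ (a ^ n - 1) * (b ^ n - 1) = x ^ 2 := by
  rintro ⟨n, x, hn, hx, h⟩
  have hbodd : Odd b := Int.odd_iff.2 (by omega)
  rcases Nat.even_or_odd' n with ⟨m, rfl | rfl⟩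
  · have hm : m ≠ 0 := by omega
    have ham : 1 < a ^ m := one_lt_pow₀ ha hm
    have hbm : 1 < b ^ m := one_lt_pow₀ hb hm
    have hA : 0 < a ^ (2 * m) - 1 := by
      have := one_lt_pow₀ ha (n := 2 * m) (by omega)
      omega
    obtain ⟨d, y, z, hd, hy, hz⟩ := split_sq hA h
    have ea : a ^ (2 * m) = (a ^ m) ^ 2 := by rw [mul_comm, pow_mul]
    have eb : b ^ (2 * m) = (b ^ m) ^ 2 := by rw [mul_comm, pow_mul]
    rw [ea] at hy
    rw [eb] at hz
    have hame : Even (a ^ m) := haeven.pow_of_ne_zero hm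
    have hdo : Odd d := by
      have : Odd (d * y ^ 2) := by rw [← hy]; exact (hame.pow_of_ne_zero two_ne_zero).sub_odd odd_one
      exact (Int.odd_mul.1 this).1
    have hns : ¬ IsSquare d := by
      rintro ⟨r, rfl⟩
      have h1 : (a ^ m) ^ 2 = (r * y) ^ 2 + 1 := by linear_combination hy
      rw [← sq_abs (r * y)] at h1
      have h0 := abs_nonneg (r * y)
      generalize |r * y| = t at h1 h0
      rcases le_or_gt (a ^ m) t with h2 | h2 <;> nlinarith
    obtain ⟨s, hs⟩ := Pell.IsFundamental.exists_of_not_isSquare hd hns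
    let S : Pell.Solution₁ d := Pell.Solution₁.mk (a ^ m) |y| (by rw [sq_abs]; linarith)
    let T : Pell.Solution₁ d := Pell.Solution₁.mk (b ^ m) |z| (by rw [sq_abs]; linarith)
    obtain ⟨i, hi⟩ := hs.eq_pow_of_nonneg (a := S) (by simp only [S, Pell.Solution₁.x_mk]; omega)
      (by simp [S])
    obtain ⟨j, hj⟩ := hs.eq_pow_of_nonneg (a := T) (by simp only [T, Pell.Solution₁.x_mk]; omega)
      (by simp [T])
    have hix : (s ^ i).x = a ^ m := by rw [← hi]; simp [S]
    have hjx : (s ^ j).x = b ^ m := by rw [← hj]; simp [T]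
    have hse : Even s.x := by
      by_contra hc
      have := pell_odd_pow hdo s (Int.not_even_iff_odd.1 hc) i
      rw [hix] at this
      exact (Int.not_even_iff_odd.2 this) hame
    obtain ⟨w, hw⟩ := pell_even_pow s hse j (by rw [hjx]; exact hbodd.pow)
    refine two_nonres hb hbprime hb8 (w := w) ?_
    rw [← hw, hjx]
    exact dvd_pow_self b hm
  · have h1 : Even (a ^ (2 * m + 1)) := haeven.pow_of_ne_zero (by omega)
    have h2 : b ^ (2 * m + 1) % 4 = 3 := by
      have hb4 : b ≡ -1 [ZMOD 4] := by unfold Int.ModEq; omega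
      have := hb4.pow (2 * m + 1)
      rw [Odd.neg_one_pow ⟨m, rfl⟩] at this
      unfold Int.ModEq at this
      omega
    obtain ⟨u, hu⟩ := h1
    rw [hu] at h
    obtain ⟨v, hv⟩ : ∃ v, b ^ (2 * m + 1) = 4 * v + 3 := ⟨b ^ (2 * m + 1) / 4, by omega⟩
    rw [hv] at h
    have h3 : x ^ 2 = 4 * (2 * u * v + u - v - 1) + 2 := by linear_combination -h
    rcases Int.even_or_odd' x with ⟨k, rfl | rfl⟩
    · have : 4 * k ^ 2 = 4 * (2 * u * v + u - v - 1) + 2 := by linear_combination h3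
      omega
    · have : 4 * (k ^ 2 + k) + 1 = 4 * (2 * u * v + u - v - 1) + 2 := by linear_combination h3
      omega
end

section
/- The equation (2^n − 1)(3^n − 1) = x^2 has no solution in positive integers n, x. -/
open Pell in
theorem pell_odd_dvd {d : ℤ} (a : Solution₁ d) (m : ℕ) :
    a.x ∣ (a ^ (2 * m + 1)).x ∧ a.x ∣ (a ^ (2 * m)).y := by
  induction m with
  | zero => simp
  | succ k ih =>
    obtain ⟨h1, -⟩ := ih
    have h2 : a.x ∣ (a ^ (2 * (k + 1))).y := by
      rw [show 2 * (k + 1) = 2 * k + 1 + 1 by ring, pow_succ, Solution₁.y_mul]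
      exact dvd_add (Dvd.dvd.mul_right h1 _) (Dvd.intro_left _ rfl)
    refine ⟨?_, h2⟩
    rw [pow_succ, Solution₁.x_mul]
    exact dvd_add (Dvd.intro_left _ rfl) (Dvd.dvd.mul_left (Dvd.dvd.mul_right h2 _) _)

open Pell in
theorem pell_even_x {d : ℤ} (a : Solution₁ d) (m : ℕ) :
    (a ^ (m + m)).x = 2 * (a ^ m).x ^ 2 - 1 := by
  rw [pow_add, Solution₁.x_mul]
  have := (a ^ m).prop
  linarith

open Pell in
theorem pell_core (d y z : ℤ) (k : ℕ) (hk : 0 < k) (hy0 : 0 ≤ y) (hz0 : 0 ≤ z)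
    (hy : (2 ^ k : ℤ) ^ 2 - d * y ^ 2 = 1) (hz : (3 ^ k : ℤ) ^ 2 - d * z ^ 2 = 1) : False := by
  have h1 : (1 : ℤ) < 2 ^ k := one_lt_pow₀ (by norm_num) hk.ne'
  let u : Solution₁ d := Solution₁.mk _ _ hy
  let v : Solution₁ d := Solution₁.mk _ _ hz
  have hux : 1 < u.x := h1
  obtain ⟨a, ha⟩ := IsFundamental.exists_of_not_isSquare
    (Solution₁.d_pos_of_one_lt_x hux) (Solution₁.d_nonsquare_of_one_lt_x hux)
  obtain ⟨m, hm⟩ := ha.eq_pow_of_nonneg (a := u) (by linarith) hy0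
  obtain ⟨l, hl⟩ := ha.eq_pow_of_nonneg (a := v) (by change (0 : ℤ) < 3 ^ k; positivity) hz0
  have hm' : (2 : ℤ) ^ k = (a ^ m).x := by rw [← hm]; rfl
  have hl' : (3 : ℤ) ^ k = (a ^ l).x := by rw [← hl]; rfl
  have e2 : (2 : ℤ) ∣ 2 ^ k := dvd_pow_self _ hk.ne'
  have e3 : (3 : ℤ) ∣ 3 ^ k := dvd_pow_self _ hk.ne'
  have hev : (2 : ℤ) ∣ a.x := by
    obtain ⟨r, rfl⟩ | ⟨r, rfl⟩ := m.even_or_odd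
    · rw [pell_even_x] at hm'
      omega
    · have hd := (pell_odd_dvd a r).1
      rw [← hm'] at hd
      obtain ⟨i, -, hi⟩ := (dvd_prime_pow Int.prime_two k).1 hd
      have hi0 : i ≠ 0 := by
        rintro rfl
        have := ha.1
        rw [pow_zero] at hi
        obtain h | h := Int.associated_iff.1 hi <;> omega
      exact (dvd_pow_self 2 hi0).trans hi.symm.dvd
  obtain ⟨r, rfl⟩ | ⟨r, rfl⟩ := l.even_or_odd
  · rw [pell_even_x] at hl'
    have h3 : (3 : ℤ) ∣ 2 * (a ^ r).x ^ 2 - 1 := hl' ▸ e3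
    generalize (a ^ r).x = s at h3
    have : s % 3 = 0 ∨ s % 3 = 1 ∨ s % 3 = 2 := by omega
    have h4 := Int.emod_eq_zero_of_dvd h3
    rcases this with h | h | h <;> simp [pow_two, Int.sub_emod, Int.mul_emod, h] at h4
  · have hd := hev.trans (pell_odd_dvd a r).1
    rw [← hl'] at hd
    have := Int.prime_two.dvd_of_dvd_pow hd
    omega

theorem stmt_4 :
    ¬ ∃ (n x : ℕ), 0 < n ∧ 0 < x ∧ (2 ^ n - 1) * (3 ^ n - 1) = x ^ 2 := by
  rintro ⟨n, x, hn, hx, h⟩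
  obtain ⟨k, rfl⟩ | ⟨k, rfl⟩ := n.even_or_odd
  · obtain ⟨D, b, hb, hD⟩ := Nat.sq_mul_squarefree (2 ^ (k + k) - 1)
    have p2 : 1 < 2 ^ (k + k) := Nat.one_lt_two_pow (by omega)
    have p3 : 1 ≤ 3 ^ (k + k) := Nat.one_le_pow _ _ (by norm_num)
    have hb0 : 0 < b := by
      rcases Nat.eq_zero_or_pos b with rfl | h
      · simp at hb; omega
      · exact h
    have hD0 : 0 < D := Nat.pos_of_ne_zero hD.ne_zero
    rw [← hb] at h
    have hbx : b ∣ x := by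
      rw [← Nat.pow_dvd_pow_iff (n := 2) (by norm_num), ← h, mul_assoc]
      exact dvd_mul_right _ _
    obtain ⟨w, rfl⟩ := hbx
    have h' : D * (3 ^ (k + k) - 1) = w ^ 2 := by
      apply Nat.eq_of_mul_eq_mul_left (pow_pos hb0 2)
      rw [← mul_assoc, h, mul_pow]
    have hDw : D ∣ w := (hD.dvd_pow_iff_dvd (by norm_num : 2 ≠ 0)).1 (h' ▸ dvd_mul_right _ _)
    obtain ⟨z, rfl⟩ := hDw
    have hz : 3 ^ (k + k) - 1 = D * z ^ 2 := by
      apply Nat.eq_of_mul_eq_mul_left hD0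
      rw [h']; ring
    have hy2 : 2 ^ (k + k) = b ^ 2 * D + 1 := by omega
    have hz2 : 3 ^ (k + k) = D * z ^ 2 + 1 := by omega
    zify at hy2 hz2
    rw [pow_add] at hy2 hz2
    exact pell_core D b z k (by omega) (by positivity) (by positivity)
      (by linarith) (by linarith)
  · have h3 : 3 ^ (2 * k + 1) % 4 = 3 := by
      rw [pow_succ, pow_mul, Nat.mul_mod, Nat.pow_mod]; norm_num
    have h2 : 2 ^ (2 * k + 1) = 2 * 2 ^ (2 * k) := by ring
    have p2 : 1 ≤ 2 ^ (2 * k) := Nat.one_le_pow _ _ (by norm_num)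
    generalize 2 ^ (2 * k + 1) = P at *
    generalize 2 ^ (2 * k) = Q at *
    generalize 3 ^ (2 * k + 1) = R at *
    obtain ⟨A, hA⟩ : ∃ A, P - 1 = 2 * A + 1 := ⟨Q - 1, by omega⟩
    obtain ⟨B, hB⟩ : ∃ B, R - 1 = 4 * B + 2 := ⟨R / 4, by omega⟩
    rw [hA, hB] at h
    have h5 : x ^ 2 = 4 * (2 * A * B + A + B) + 2 := by rw [← h]; ring
    obtain ⟨c, rfl⟩ | ⟨c, rfl⟩ := x.even_or_odd
    · have : (c + c) ^ 2 = 4 * c ^ 2 := by ring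
      omega
    · have : (2 * c + 1) ^ 2 = 4 * (c ^ 2 + c) + 1 := by ring
      omega
end

section
/- The only solutions in positive integers x, y of the equation x^3 = 2y^2 − 1 are (x, y) = (1, 1) and (x, y) = (23, 78). -/
lemma cop_pow {a b c k : ℕ} (hab : Nat.Coprime a b) (h : a * b = c ^ k) :
    ∃ d e, a = d ^ k ∧ b = e ^ k := by
  have h1 : IsUnit (gcd a b) := by
    rw [Nat.isUnit_iff]; exact hab
  have h2 : IsUnit (gcd b a) := by
    rw [Nat.isUnit_iff]; exact hab.symm
  obtain ⟨d, hd⟩ := exists_eq_pow_of_mul_eq_pow h1 h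
  obtain ⟨e, he⟩ := exists_eq_pow_of_mul_eq_pow h2 (by rw [mul_comm]; exact h)
  exact ⟨d, e, hd, he⟩

lemma cop_of {a b : ℕ} (h : ∀ p, p.Prime → p ∣ a → p ∣ b → False) : Nat.Coprime a b := by
  by_contra hc
  obtain ⟨p, hp, h1, h2⟩ := Nat.Prime.not_coprime_iff_dvd.mp hc
  exact h p hp h1 h2

lemma cop_not {a b p : ℕ} (h : Nat.Coprime a b) (hp : p.Prime) (ha : p ∣ a) (hb : p ∣ b) : False :=
  Nat.Prime.not_coprime_iff_dvd.mpr ⟨p, hp, ha, hb⟩ h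

/-- splitting `2PQ = N^2` -/
lemma lemG {P Q N : ℕ} (hc : Nat.Coprime P Q) (hN : 0 < N) (h : 2 * (P * Q) = N ^ 2) :
    ∃ S T, Odd S ∧ Nat.Coprime S T ∧ 0 < T ∧ S ^ 4 + 4 * T ^ 4 = P ^ 2 + Q ^ 2 := by
  have h2N : 2 ∣ N := Nat.prime_two.dvd_of_dvd_pow (Dvd.intro _ h)
  obtain ⟨n, rfl⟩ := h2N
  have h' : P * Q = 2 * n ^ 2 := by nlinarith
  have key : ∀ P Q : ℕ, Nat.Coprime P Q → P * Q = 2 * n ^ 2 → 2 ∣ P →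
      ∃ S T, Odd S ∧ Nat.Coprime S T ∧ 0 < T ∧ S ^ 4 + 4 * T ^ 4 = P ^ 2 + Q ^ 2 := by
    intro P Q hc h' hP
    obtain ⟨R, rfl⟩ := hP
    have hRQ : Nat.Coprime R Q := Nat.Coprime.coprime_dvd_left (Dvd.intro_left 2 rfl) hc
    obtain ⟨T, S, rfl, rfl⟩ := cop_pow hRQ (show R * Q = n ^ 2 by nlinarith)
    refine ⟨S, T, ?_, ?_, ?_, by ring⟩
    · rw [← Nat.not_even_iff_odd, even_iff_two_dvd]
      intro h2
      exact cop_not hc Nat.prime_two (Dvd.intro _ rfl) (dvd_pow h2 (by norm_num))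
    · exact cop_of fun p hp h1 h2 =>
        cop_not hRQ hp (dvd_pow h2 (by norm_num)) (dvd_pow h1 (by norm_num))
    · rcases Nat.eq_zero_or_pos T with h0 | h0
      · subst h0; simp at h'; omega
      · exact h0
  rcases (Nat.prime_two.dvd_mul.mp (Dvd.intro _ h'.symm)) with h2 | h2
  · exact key P Q hc h' h2
  · obtain ⟨S, T, a, b, c, d⟩ := key Q P hc.symm (by rw [mul_comm]; exact h') h2
    exact ⟨S, T, a, b, c, by omega⟩

set_option maxHeartbeats 2000000 in
lemma lemF (a : ℕ) : ∀ s t : ℕ, Odd s → Nat.Coprime s t → 0 < t → s ^ 4 + 4 * t ^ 4 = a ^ 2 → False := by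
  induction a using Nat.strong_induction_on with
  | _ a ih =>
  intro s t hs hc ht h
  have hsa : s ^ 2 < a := by
    have : 0 < t ^ 4 := by positivity
    nlinarith
  have hs2 : Odd (s ^ 2) := hs.pow
  have ha : Odd a := by
    have : Odd (a ^ 2) := by
      rw [← h]; exact hs.pow.add_even (by exact ⟨2 * t ^ 4, by ring⟩)
    exact (Nat.odd_pow_iff (by norm_num)).mp this
  obtain ⟨n, hn⟩ : ∃ n, a = s ^ 2 + 2 * n := by
    obtain ⟨i, hi⟩ := ha
    obtain ⟨j, hj⟩ := hs2
    exact ⟨i - j, by omega⟩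
  have hnt : n * (n + s ^ 2) = t ^ 4 := by
    subst hn; nlinarith
  have hc1 : Nat.Coprime n (n + s ^ 2) := cop_of fun p hp h1 h2 => by
    have h3 : p ∣ s ^ 2 := (Nat.dvd_add_right h1).mp h2
    have h4 : p ∣ t ^ 4 := by rw [← hnt]; exact Dvd.dvd.mul_right h1 _
    exact cop_not hc hp (hp.dvd_of_dvd_pow h3) (hp.dvd_of_dvd_pow h4)
  obtain ⟨N, M, hN, hM⟩ := cop_pow hc1 hnt
  subst hN
  have hN0 : 0 < N := by
    rcases Nat.eq_zero_or_pos N with h0 | h0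
    · subst h0
      have : 0 < t ^ 4 := by positivity
      simp at hnt; omega
    · exact h0
  have hs0 : 0 < s := hs.pos
  have hMN : N ^ 2 < M ^ 2 := by
    have : 0 < s ^ 2 := by positivity
    by_contra hh
    push Not at hh
    have := Nat.mul_le_mul hh hh
    nlinarith
  obtain ⟨D, hD⟩ : ∃ D, M ^ 2 = N ^ 2 + D := ⟨M ^ 2 - N ^ 2, by omega⟩
  have hsD : D * (M ^ 2 + N ^ 2) = s ^ 2 := by
    have : M ^ 4 = (N ^ 2 + D) ^ 2 := by rw [← hD]; ring
    rw [hD]; nlinarith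
  have hcNM : Nat.Coprime N M := cop_of fun p hp h1 h2 => by
    refine cop_not hc1 hp (dvd_pow h1 (by norm_num)) ?_
    rw [hM]; exact dvd_pow h2 (by norm_num)
  have hDo : Odd D := by
    have : Odd (D * (M ^ 2 + N ^ 2)) := by rw [hsD]; exact hs2
    exact (Nat.odd_mul.mp this).1
  have hc2 : Nat.Coprime D (M ^ 2 + N ^ 2) := cop_of fun p hp h1 h2 => by
    have hp2 : ¬ p = 2 := by
      rintro rfl
      have := hDo.not_two_dvd_nat
      exact this h1
    have h3 : p ∣ 2 * N ^ 2 := by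
      have : M ^ 2 + N ^ 2 = D + 2 * N ^ 2 := by omega
      rw [this] at h2
      exact (Nat.dvd_add_right h1).mp h2
    have h4 : p ∣ N ^ 2 := by
      rcases hp.dvd_mul.mp h3 with h | h
      · exact absurd ((Nat.prime_dvd_prime_iff_eq hp Nat.prime_two).mp h) hp2
      · exact h
    have h5 : p ∣ M ^ 2 := by rw [hD]; exact dvd_add h4 h1
    exact cop_not hcNM hp (hp.dvd_of_dvd_pow h4) (hp.dvd_of_dvd_pow h5)
  obtain ⟨Y, X, hY, hX⟩ := cop_pow hc2 hsD
  have hYo : Odd Y := by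
    rw [hY] at hDo; exact (Nat.odd_pow_iff (by norm_num)).mp hDo
  have hXo : Odd X := by
    have : Odd (X ^ 2) := by
      rw [← hX, hD]
      have : N ^ 2 + D + N ^ 2 = D + 2 * N ^ 2 := by ring
      rw [this]; exact hDo.add_even ⟨N ^ 2, by ring⟩
    exact (Nat.odd_pow_iff (by norm_num)).mp this
  have hXY : Y ≤ X := by
    by_contra hh
    push Not at hh
    nlinarith
  obtain ⟨Q, hQ⟩ : ∃ Q, X = Y + 2 * Q := by
    obtain ⟨i, hi⟩ := hXo
    obtain ⟨j, hj⟩ := hYo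
    exact ⟨i - j, by omega⟩
  have h2PQ : 2 * ((Q + Y) * Q) = N ^ 2 := by subst hQ; nlinarith
  have hsum : (Q + Y) ^ 2 + Q ^ 2 = M ^ 2 := by subst hQ; nlinarith
  have hcPQ : Nat.Coprime (Q + Y) Q := cop_of fun p hp h1 h2 => by
    have h3 : p ∣ N ^ 2 := by rw [← h2PQ]; exact Dvd.dvd.mul_left (Dvd.dvd.mul_right h1 _) _
    have h4 : p ∣ M ^ 2 := by
      rw [← hsum]; exact dvd_add (dvd_pow h1 (by norm_num)) (dvd_pow h2 (by norm_num))
    exact cop_not hcNM hp (hp.dvd_of_dvd_pow h3) (hp.dvd_of_dvd_pow h4)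
  obtain ⟨S, T, hS, hST, hT, hfin⟩ := lemG hcPQ hN0 h2PQ
  refine ih M ?_ S T hS hST hT (by rw [hfin, hsum])
  have h1 : M ≤ M ^ 4 := Nat.le_self_pow (by norm_num) M
  have h2 : 0 < N ^ 4 := by positivity
  omega

lemma lemH {g w : ℕ} (h : g ^ 4 + 1 = 2 * w ^ 2) : g = 1 := by
  by_contra hg
  have hgo : Odd g := by
    have : Odd (g ^ 4) := by
      rw [← Nat.not_even_iff_odd]; rintro ⟨r, hr⟩; omega
    exact (Nat.odd_pow_iff (by norm_num)).mp this
  have hg1 : 1 < g := by have := hgo.pos; omega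
  obtain ⟨j, hj⟩ := hgo
  obtain ⟨k, hk⟩ : ∃ k, g ^ 4 = 16 * k + 1 := by
    obtain ⟨m, hm⟩ := Nat.even_mul_succ_self j
    refine ⟨(j ^ 2 + j) * (j ^ 2 + j) + m, ?_⟩
    have : j * j + j = m + m := by linarith [hm, Nat.mul_succ j j]
    rw [hj]; nlinarith
  have hwg : g < w := by
    by_contra hh
    push Not at hh
    have : w ^ 2 ≤ g ^ 2 := Nat.pow_le_pow_left hh 2
    have h4 : g ^ 4 = g ^ 2 * g ^ 2 := by ring
    have : 4 ≤ g ^ 2 := by nlinarith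
    nlinarith
  have hwo : Odd w := by
    have : Odd (w ^ 2) := ⟨4 * k, by omega⟩
    exact (Nat.odd_pow_iff (by norm_num)).mp this
  obtain ⟨Q, hQ⟩ : ∃ Q, w = g + 2 * Q := by
    obtain ⟨i, hi⟩ := hwo
    exact ⟨i - j, by omega⟩
  have hQ0 : 0 < Q := by omega
  have hcgw : Nat.Coprime g w := cop_of fun p hp h1 h2 => by
    have h3 : p ∣ g ^ 4 + 1 := by rw [h]; exact Dvd.dvd.mul_left (dvd_pow h2 (by norm_num)) _
    exact hp.one_lt.ne' (Nat.dvd_one.mp ((Nat.dvd_add_right (dvd_pow h1 (by norm_num))).mp h3))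
  have hcPQ : Nat.Coprime (Q + g) Q := cop_of fun p hp h1 h2 => by
    have h3 : p ∣ g := (Nat.dvd_add_right h2).mp h1
    refine cop_not hcgw hp h3 ?_
    rw [hQ]; exact dvd_add h3 (Dvd.dvd.mul_left h2 _)
  have hprod : (2 * ((Q + g) * Q)) * ((Q + g) ^ 2 + Q ^ 2) = (4 * k) ^ 2 := by
    have e1 : 2 * w ^ 2 = 16 * k + 2 := by omega
    have e2 : 4 * w ^ 4 = (16 * k + 2) ^ 2 := by rw [← e1]; ring
    have e3 : w ^ 4 = g ^ 4 + 64 * k ^ 2 := by nlinarith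
    have e4 : w ^ 4 = g ^ 4 + 4 * ((2 * ((Q + g) * Q)) * ((Q + g) ^ 2 + Q ^ 2)) := by
      rw [hQ]; ring
    nlinarith
  have hc : Nat.Coprime (2 * ((Q + g) * Q)) ((Q + g) ^ 2 + Q ^ 2) := cop_of fun p hp h1 h2 => by
    rcases hp.dvd_mul.mp h1 with h3 | h3
    · have hp2 := (Nat.prime_dvd_prime_iff_eq hp Nat.prime_two).mp h3
      subst hp2
      have : (Q + g) ^ 2 + Q ^ 2 = 2 * (Q ^ 2 + Q * g) + g ^ 2 := by ring
      rw [this] at h2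
      have h5 := Nat.prime_two.dvd_of_dvd_pow ((Nat.dvd_add_right (Dvd.intro _ rfl)).mp h2)
      omega
    · rcases hp.dvd_mul.mp h3 with h4 | h4
      · exact cop_not hcPQ hp h4
          (hp.dvd_of_dvd_pow ((Nat.dvd_add_right (dvd_pow h4 (by norm_num))).mp h2))
      · exact cop_not hcPQ hp
          (hp.dvd_of_dvd_pow ((Nat.dvd_add_left (dvd_pow h4 (by norm_num))).mp h2)) h4
  obtain ⟨N, M, hN, hM⟩ := cop_pow hc hprod
  have hN0 : 0 < N := by
    rcases Nat.eq_zero_or_pos N with h0 | h0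
    · subst h0
      have : 0 < 2 * ((Q + g) * Q) := by positivity
      simp at hN; omega
    · exact h0
  obtain ⟨S, T, hS, hST, hT, hfin⟩ := lemG hcPQ hN0 hN
  exact lemF M S T hS hST hT (by rw [hfin, hM])

lemma pow_one_nat {n k : ℕ} (hk : k ≠ 0) (h : n ^ k = 1) : n = 1 := by
  simpa [hk] using h

lemma split3 {a b c k : ℕ} (hab : Nat.Coprime a b) (h3 : ¬ 3 ∣ b)
    (h : a * b = 3 * c ^ k) : ∃ d e, a = 3 * d ^ k ∧ b = e ^ k := by
  rcases Nat.prime_three.dvd_mul.mp (Dvd.intro _ h.symm) with h1 | h1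
  · obtain ⟨r, rfl⟩ := h1
    have hrb : Nat.Coprime r b := Nat.Coprime.coprime_dvd_left (Dvd.intro_left 3 rfl) hab
    obtain ⟨d, e, rfl, rfl⟩ := cop_pow hrb (show r * b = c ^ k by nlinarith)
    exact ⟨d, e, rfl, rfl⟩
  · exact absurd h1 h3

lemma odd_sq {n : ℕ} (h : Odd n) : ∃ m, n ^ 2 = 8 * m + 1 := by
  obtain ⟨j, rfl⟩ := h
  obtain ⟨m, hm⟩ := Nat.even_mul_succ_self j
  have : j * j + j = m + m := by linarith [hm, Nat.mul_succ j j]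
  exact ⟨m, by nlinarith⟩

lemma sq_mod3 (n : ℕ) : n ^ 2 % 3 = 0 ∨ n ^ 2 % 3 = 1 := by
  have : n % 3 = 0 ∨ n % 3 = 1 ∨ n % 3 = 2 := by omega
  rcases this with h | h | h <;> simp [Nat.pow_mod, h]

lemma pow4_mod3 (n : ℕ) : n ^ 4 % 3 = 0 ∨ n ^ 4 % 3 = 1 := by
  have : n % 3 = 0 ∨ n % 3 = 1 ∨ n % 3 = 2 := by omega
  rcases this with h | h | h <;> simp [Nat.pow_mod, h]

lemma pow4_mod4 (n : ℕ) : n ^ 4 % 4 = 0 ∨ n ^ 4 % 4 = 1 := by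
  have : n % 4 = 0 ∨ n % 4 = 1 ∨ n % 4 = 2 ∨ n % 4 = 3 := by omega
  rcases this with h | h | h | h <;> simp [Nat.pow_mod, h]

lemma pow4_mod16 (n : ℕ) : n ^ 4 % 16 = if n % 2 = 0 then 0 else 1 := by
  have h : n % 16 < 16 := Nat.mod_lt _ (by norm_num)
  have h2 : n % 2 = (n % 16) % 2 := by omega
  rw [h2, Nat.pow_mod]
  generalize n % 16 = r at *
  interval_cases r <;> rfl

lemma cop_lin {a b : ℕ} (k : ℕ) (h : b = k * a + 1) : Nat.Coprime a b := by
  subst h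
  exact cop_of fun p hp h1 h2 =>
    hp.one_lt.ne' (Nat.dvd_one.mp ((Nat.dvd_add_right (Dvd.dvd.mul_left h1 _)).mp h2))

lemma lemE (f : ℕ) : ∀ e : ℕ, e ^ 4 = 12 * f ^ 4 + 1 → f = 0 := by
  induction f using Nat.strong_induction_on with
  | _ f ih =>
  intro e h
  by_contra hf
  have heo : Odd e := by
    have : Odd (e ^ 4) := ⟨6 * f ^ 4, by omega⟩
    exact (Nat.odd_pow_iff (by norm_num)).mp this
  obtain ⟨m, hm⟩ := odd_sq heo
  have h1 : (4 * m) * (4 * m + 1) = 3 * f ^ 4 := by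
    have : e ^ 4 = (8 * m + 1) ^ 2 := by rw [← hm]; ring
    nlinarith
  have h3 : ¬ 3 ∣ 4 * m + 1 := by
    rcases sq_mod3 e with h | h <;> omega
  obtain ⟨q, p, hq, hp⟩ := split3 (cop_lin 1 (by ring)) h3 h1
  have hqe : q % 2 = 0 := by
    have := pow4_mod4 q
    have h16 := pow4_mod16 q
    split_ifs at h16 with hh
    · exact hh
    · omega
  have hpo : Odd p := by
    have : Odd (p ^ 4) := ⟨2 * m, by omega⟩
    exact (Nat.odd_pow_iff (by norm_num)).mp this
  obtain ⟨r, rfl⟩ : ∃ r, q = 2 * r := ⟨q / 2, by omega⟩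
  obtain ⟨n, hn⟩ := odd_sq hpo
  have h2 : n * (4 * n + 1) = 3 * r ^ 4 := by
    have : p ^ 4 = (8 * n + 1) ^ 2 := by rw [← hn]; ring
    have e2 : (2 * r) ^ 4 = 16 * r ^ 4 := by ring
    nlinarith
  have h4 : ¬ 3 ∣ 4 * n + 1 := by
    rcases sq_mod3 p with h | h <;> omega
  obtain ⟨f', e', hf', he'⟩ := split3 (cop_lin 4 rfl) h4 h2
  have hpow : f ^ 4 = 16 * r ^ 4 * p ^ 4 := by
    rw [hp, hq] at h1
    have e2 : (2 * r) ^ 4 = 16 * r ^ 4 := by ring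
    rw [e2] at h1; nlinarith
  have hpow' : r ^ 4 = f' ^ 4 * e' ^ 4 := by
    rw [he', hf'] at h2; nlinarith
  have hf4 : 0 < f ^ 4 := by positivity
  have hlt : f' ^ 4 < f ^ 4 := by
    have he1 : 1 ≤ e' ^ 4 := by omega
    have hp1 : 1 ≤ p ^ 4 := by omega
    have a1 : f' ^ 4 ≤ r ^ 4 := by rw [hpow']; exact Nat.le_mul_of_pos_right _ he1
    have a2 : 16 * r ^ 4 ≤ f ^ 4 := by rw [hpow]; exact Nat.le_mul_of_pos_right _ hp1
    omega
  have hz := ih f' (lt_of_pow_lt_pow_left₀ 4 (by omega) hlt) e' (by omega)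
  rw [hz] at hpow'
  have : r ^ 4 = 0 := by rw [hpow']; ring
  rw [this] at hpow
  omega

lemma lemW {w r : ℕ} (h : 4 * w ^ 4 = 3 * r ^ 4 + 1) : r = 1 ∧ w = 1 := by
  have hw : 0 < w ^ 2 := by
    rcases Nat.eq_zero_or_pos w with h0 | h0
    · subst h0; simp at h
    · positivity
  obtain ⟨z, hz⟩ : ∃ z, w ^ 2 = z + 1 := ⟨w ^ 2 - 1, by omega⟩
  have h1 : (2 * z + 3) * (2 * z + 1) = 3 * r ^ 4 := by
    have : w ^ 4 = (z + 1) ^ 2 := by rw [← hz]; ring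
    nlinarith
  have hc : Nat.Coprime (2 * z + 3) (2 * z + 1) := cop_of fun p hp h1 h2 => by
    have h3 : p ∣ 2 := (Nat.dvd_add_right h2).mp (show p ∣ 2 * z + 1 + 2 from h1)
    have hp2 := (Nat.prime_dvd_prime_iff_eq hp Nat.prime_two).mp h3
    subst hp2; omega
  have h3 : ¬ 3 ∣ 2 * z + 1 := by
    rcases sq_mod3 w with h | h <;> omega
  obtain ⟨q, g, hq, hg⟩ := split3 hc h3 h1
  have := lemH (g := g) (w := w) (by omega)
  subst this
  have hz0 : z = 0 := by omega
  subst hz0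
  have hr : r ^ 4 = 1 := by omega
  have hw1 : w ^ 2 = 1 := by omega
  exact ⟨pow_one_nat (by norm_num) hr, pow_one_nat (by norm_num) hw1⟩

lemma lemD {D T : ℕ} (hT : 0 < T) (h : D * (D + 1) = 12 * T ^ 4) : D = 3 ∧ T = 1 := by
  have h4 : 4 ∣ D ∨ 4 ∣ D + 1 := by
    rcases Nat.even_or_odd D with hD | hD
    · left
      have : Nat.Coprime 4 (D + 1) := by
        have : Nat.Coprime (2 ^ 2) (D + 1) := Nat.Coprime.pow_left 2
          ((Nat.coprime_two_left).mpr hD.add_one)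
        simpa using this
      exact this.dvd_of_dvd_mul_right (by rw [h]; exact ⟨3 * T ^ 4, by ring⟩)
    · right
      have : Nat.Coprime 4 D := by
        have : Nat.Coprime (2 ^ 2) D := Nat.Coprime.pow_left 2
          ((Nat.coprime_two_left).mpr hD)
        simpa using this
      exact this.dvd_of_dvd_mul_left (by rw [h]; exact ⟨3 * T ^ 4, by ring⟩)
  have hT4 : 0 < T ^ 4 := by positivity
  rcases h4 with ⟨m, rfl⟩ | ⟨m, hm⟩
  · exfalso
    have h1 : m * (4 * m + 1) = 3 * T ^ 4 := by nlinarith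
    have hc : Nat.Coprime m (4 * m + 1) := cop_lin 4 rfl
    by_cases h3 : 3 ∣ 4 * m + 1
    · have h3' : ¬ 3 ∣ m := by omega
      obtain ⟨f, e, hf, he⟩ := split3 hc.symm h3' (by rw [mul_comm]; exact h1)
      have := pow4_mod4 f
      omega
    · obtain ⟨f, e, hf, he⟩ := split3 hc h3 h1
      have := lemE f e (by omega)
      subst this
      have : m = 0 := by omega
      subst this
      omega
  · have h1 : m * D = 3 * T ^ 4 := by rw [hm] at h; nlinarith
    have hc : Nat.Coprime m D := by
      have : Nat.Coprime D (D + 1) := cop_lin 1 (by ring)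
      rw [hm] at this
      exact (Nat.Coprime.coprime_dvd_right (Dvd.intro_left 4 rfl) this).symm
    by_cases h3 : 3 ∣ m
    · have h3' : ¬ 3 ∣ D := by omega
      obtain ⟨f, e, hf, he⟩ := split3 hc h3' h1
      have := pow4_mod3 e
      omega
    · obtain ⟨e, f, hf, he⟩ := split3 hc.symm h3 (by rw [mul_comm]; exact h1)
      obtain ⟨rfl, rfl⟩ := lemW (w := f) (r := e) (by omega)
      have hm1 : m = 1 := by omega
      have hD : D = 3 := by omega
      subst hm1 hD
      have : T ^ 4 = 1 := by omega
      exact ⟨rfl, pow_one_nat (by norm_num) this⟩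

lemma lemC {c u a : ℕ} (ha : 0 < a) (h : c ^ 2 = 3 * u ^ 2 + 1)
    (h2 : c * (c + 2 * u) = 2 * a ^ 2) : a = 2 := by
  have hce : 2 ∣ c := by
    rcases Nat.prime_two.dvd_mul.mp (Dvd.intro _ h2.symm) with h | h
    · exact h
    · omega
  obtain ⟨s, rfl⟩ := hce
  have huo : Odd u := by
    rw [← Nat.not_even_iff_odd]
    rintro ⟨j, rfl⟩
    have : 4 * s ^ 2 = 12 * j ^ 2 + 1 := by nlinarith
    omega
  obtain ⟨m, hm⟩ := odd_sq huo
  have hs : s ^ 2 = 6 * m + 1 := by nlinarith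
  have hso : Odd s := by
    have : Odd (s ^ 2) := ⟨3 * m, by omega⟩
    exact (Nat.odd_pow_iff (by norm_num)).mp this
  obtain ⟨t, ht⟩ : ∃ t, s + u = 2 * t := by
    obtain ⟨i, hi⟩ := hso
    obtain ⟨j, hj⟩ := huo
    exact ⟨i + j + 1, by omega⟩
  have h3 : 4 * (s * t) = a ^ 2 := by
    have : 2 * s * (2 * s + 2 * u) = 2 * (4 * (s * t)) := by
      have : 2 * s + 2 * u = 4 * t := by omega
      rw [this]; ring
    omega
  have h2a : 2 ∣ a := Nat.prime_two.dvd_of_dvd_pow (n := 2) (by rw [← h3]; exact ⟨2 * (s * t), by ring⟩)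
  obtain ⟨b, rfl⟩ := h2a
  have h4 : s * t = b ^ 2 := by nlinarith
  have hc : Nat.Coprime s t := cop_of fun p hp h5 h6 => by
    have h7 : p ∣ u := (Nat.dvd_add_right h5).mp (by rw [ht]; exact Dvd.dvd.mul_left h6 _)
    have h8 : p ∣ 3 * u ^ 2 := Dvd.dvd.mul_left (dvd_pow h7 (by norm_num)) _
    have h9 : p ∣ 3 * u ^ 2 + 1 := by
      rw [← h]; exact dvd_pow (Dvd.dvd.mul_left h5 _) (by norm_num)
    exact hp.one_lt.ne' (Nat.dvd_one.mp ((Nat.dvd_add_right h8).mp h9))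
  obtain ⟨S, T, hS, hT⟩ := cop_pow hc h4
  have hT0 : 0 < T := by
    rcases Nat.eq_zero_or_pos T with h0 | h0
    · subst h0
      have := hso.pos
      omega
    · exact h0
  obtain ⟨D, hD⟩ : ∃ D, 4 * s + 3 * u = 2 * D + 1 := by
    obtain ⟨j, hj⟩ := huo
    exact ⟨2 * s + 3 * j + 1, by omega⟩
  have hDD : D * (D + 1) = 12 * T ^ 4 := by
    have e1 : T ^ 4 = t ^ 2 := by rw [hT]; ring
    have e2 : (2 * D + 1) ^ 2 = 12 * (s + u) ^ 2 + 1 := by rw [← hD]; nlinarith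
    rw [ht] at e2
    rw [e1]; nlinarith
  obtain ⟨h5, h6⟩ := lemD hT0 hDD
  subst h5 h6
  have : s = 1 := by omega
  have : t = 1 := by omega
  subst s t
  have : b ^ 2 = 1 := by omega
  have := pow_one_nat (by norm_num) this
  omega

lemma lemQ {a b : ℕ} (ha : 0 < a) (h : b ^ 2 + 6 * a ^ 2 = 12 * a ^ 4 + 1) : a = 2 := by
  have hb : 0 < b := by
    rcases Nat.eq_zero_or_pos b with h0 | h0
    · subst h0; omega
    · exact h0
  obtain ⟨z, rfl⟩ : ∃ z, b = z + 1 := ⟨b - 1, by omega⟩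
  have ha2 : 0 < a ^ 2 := by positivity
  obtain ⟨v, hv⟩ : ∃ v, 4 * a ^ 2 = v + 1 := ⟨4 * a ^ 2 - 1, by omega⟩
  have h1 : (2 * z + 3) * (2 * z + 1) = 3 * v ^ 2 := by
    have : 16 * a ^ 4 = (v + 1) ^ 2 := by rw [← hv]; ring
    nlinarith
  have hc : Nat.Coprime (2 * z + 3) (2 * z + 1) := cop_of fun p hp h1 h2 => by
    have h3 : p ∣ 2 := (Nat.dvd_add_right h2).mp (show p ∣ 2 * z + 1 + 2 from h1)
    have hp2 := (Nat.prime_dvd_prime_iff_eq hp Nat.prime_two).mp h3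
    subst hp2; omega
  by_cases h3 : 3 ∣ 2 * z + 1
  · exfalso
    obtain ⟨q, p, hq, hp⟩ := split3 hc.symm (by omega) (by rw [mul_comm]; exact h1)
    have := sq_mod3 p
    omega
  obtain ⟨q, p, hq, hp⟩ := split3 hc h3 h1
  have hpo : Odd p := by
    have : Odd (p ^ 2) := ⟨z, by omega⟩
    exact (Nat.odd_pow_iff (by norm_num)).mp this
  have hqo : Odd q := by
    have : Odd (3 * q ^ 2) := ⟨z + 1, by omega⟩
    exact (Nat.odd_pow_iff (by norm_num)).mp (Nat.odd_mul.mp this).2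
  have hpq : p * q = v := by
    rw [hq, hp] at h1
    have : (p * q) ^ 2 = v ^ 2 := by nlinarith
    exact Nat.pow_left_injective (n := 2) (by norm_num) this
  have hq0 := hqo.pos
  have hle : q ≤ p := by
    by_contra hh
    push Not at hh
    have : (p + 1) ^ 2 ≤ q ^ 2 := Nat.pow_le_pow_left hh 2
    have := hpo.pos
    nlinarith
  obtain ⟨u, hu⟩ : ∃ u, p = q + 2 * u := by
    obtain ⟨i, hi⟩ := hpo
    obtain ⟨j, hj⟩ := hqo
    exact ⟨i - j, by omega⟩
  have hrel : q ^ 2 = 2 * u * q + 2 * u ^ 2 + 1 := by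
    have : p ^ 2 + 2 = 3 * q ^ 2 := by omega
    rw [hu] at this; nlinarith
  have huq : u ≤ q := by
    by_contra hh
    push Not at hh
    nlinarith
  obtain ⟨c, hcu⟩ : ∃ c, q = c + u := ⟨q - u, by omega⟩
  subst hcu
  refine lemC (c := c) (u := u) ha (by nlinarith) ?_
  have : p * (c + u) + 1 = 4 * a ^ 2 := by omega
  rw [hu] at this
  nlinarith

lemma lemN {i y : ℕ} (hy : 0 < y) (h : (i + 1) * (4 * i ^ 2 + 2 * i + 1) = y ^ 2) :
    (i = 0 ∧ y = 1) ∨ (i = 11 ∧ y = 78) := by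
  by_cases h3 : 3 ∣ i + 1
  · right
    obtain ⟨n, hn⟩ := h3
    have hn0 : 0 < n := by omega
    obtain ⟨K, hK⟩ : ∃ K, K + 6 * n = 12 * n ^ 2 + 1 := ⟨12 * n ^ 2 + 1 - 6 * n, by
      have : 6 * n ≤ 12 * n ^ 2 + 1 := by nlinarith
      omega⟩
    have hK3 : 4 * i ^ 2 + 2 * i + 1 = 3 * K := by
      have : (i + 1) ^ 2 = 9 * n ^ 2 := by rw [hn]; ring
      nlinarith
    rw [hn, hK3] at h
    have h3y : 3 ∣ y := Nat.prime_three.dvd_of_dvd_pow (n := 2) (by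
      rw [← h]; exact ⟨n * (3 * K), by ring⟩)
    obtain ⟨r, rfl⟩ := h3y
    have h1 : n * K = r ^ 2 := by nlinarith
    have hc : Nat.Coprime n K := cop_of fun p hp h1 h2 => by
      have h4 : p ∣ 12 * n ^ 2 + 1 := by
        rw [← hK]; exact dvd_add h2 (Dvd.dvd.mul_left h1 _)
      have h5 : p ∣ 12 * n ^ 2 := Dvd.dvd.mul_left (dvd_pow h1 (by norm_num)) _
      exact hp.one_lt.ne' (Nat.dvd_one.mp ((Nat.dvd_add_right h5).mp h4))
    obtain ⟨a, b, ha, hb⟩ := cop_pow hc h1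
    have ha0 : 0 < a := by
      rcases Nat.eq_zero_or_pos a with h0 | h0
      · subst h0; omega
      · exact h0
    have e1 : n ^ 2 = a ^ 4 := by rw [ha]; ring
    have := lemQ (a := a) (b := b) ha0 (by omega)
    subst this
    have hn4 : n = 4 := by omega
    subst hn4
    have hK' : K = 169 := by omega
    subst hK'
    have : r ^ 2 = 26 ^ 2 := by omega
    have := Nat.pow_left_injective (n := 2) (by norm_num) this
    omega
  · left
    have hc : Nat.Coprime (i + 1) (4 * i ^ 2 + 2 * i + 1) := cop_of fun p hp h1 h2 => by
      have h4 : p ∣ 4 * i ^ 2 + 2 * i + 1 + 2 * (i + 1) := dvd_add h2 (Dvd.dvd.mul_left h1 _)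
      have e : 4 * i ^ 2 + 2 * i + 1 + 2 * (i + 1) + 4 * (i + 1) = 4 * (i + 1) ^ 2 + 3 := by ring
      have h5 : p ∣ 4 * (i + 1) ^ 2 + 3 := by
        rw [← e]; exact dvd_add h4 (Dvd.dvd.mul_left h1 _)
      have h6 : p ∣ 3 :=
        (Nat.dvd_add_right (Dvd.dvd.mul_left (dvd_pow h1 (by norm_num)) _)).mp h5
      have hp3 := (Nat.prime_dvd_prime_iff_eq hp Nat.prime_three).mp h6
      subst hp3
      exact h3 h1
    obtain ⟨a, b, ha, hb⟩ := cop_pow hc h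
    have hi : i = 0 := by
      by_contra hi
      have : 0 < i := by omega
      have l1 : 2 * i < b := by
        by_contra hh
        push Not at hh
        have := Nat.pow_le_pow_left hh 2
        nlinarith
      have := Nat.pow_le_pow_left l1 2
      have : 2 * i + 1 ≤ b := l1
      nlinarith
    subst hi
    have : y ^ 2 = 1 := by omega
    exact ⟨rfl, pow_one_nat (by norm_num) this⟩

theorem stmt_7 (x y : ℤ) (hx : 0 < x) (hy : 0 < y)
    (h : x ^ 3 = 2 * y ^ 2 - 1) : (x = 1 ∧ y = 1) ∨ (x = 23 ∧ y = 78) := by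
  lift x to ℕ using hx.le
  lift y to ℕ using hy.le
  have hN : x ^ 3 + 1 = 2 * y ^ 2 := by
    have : ((x ^ 3 + 1 : ℕ) : ℤ) = ((2 * y ^ 2 : ℕ) : ℤ) := by push_cast; linarith
    exact_mod_cast this
  have hxo : Odd x := by
    have : Odd (x ^ 3) := by
      rw [← Nat.not_even_iff_odd]; rintro ⟨r, hr⟩; omega
    exact (Nat.odd_pow_iff (by norm_num)).mp this
  obtain ⟨i, rfl⟩ := hxo
  have := lemN (i := i) (y := y) (by exact_mod_cast hy) (by nlinarith)
  rcases this with ⟨rfl, rfl⟩ | ⟨rfl, rfl⟩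
  · left; simp
  · right; simp
end

section
/- Let d be a positive integer which is not a square, let (u₁, v₁) be the fundamental (smallest positive) solution of the Pell equation u² − d v² = 1, and for each positive integer k let (u_k, v_k) be defined by u_k + v_k√d = (u₁ + v₁√d)^k. If k is even, then every prime factor p of u_k satisfies p ≡ 1 (mod 8) or p ≡ −1 (mod 8). -/
theorem stmt_9 (d : ℤ) (hd : 0 < d) (hdsq : ¬ IsSquare d)
    (a : Pell.Solution₁ d) (ha : Pell.IsFundamental a)
    (k : ℕ) (hk : 0 < k) (hke : Even k)
    (p : ℕ) (hp : p.Prime) (hdvd : (p : ℤ) ∣ (a ^ k).x) :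
    p % 8 = 1 ∨ p % 8 = 7 := by
  obtain ⟨m, rfl⟩ := hke
  have key : (a ^ (m + m)).x = 2 * (a ^ m).x ^ 2 - 1 := by
    rw [pow_add, Pell.Solution₁.x_mul]
    have := (a ^ m).prop
    linarith
  rw [key] at hdvd
  generalize (a ^ m).x = u at hdvd
  haveI : Fact p.Prime := ⟨hp⟩
  have hp2 : p ≠ 2 := by
    rintro rfl
    push_cast at hdvd
    omega
  rw [← ZMod.exists_sq_eq_two_iff hp2]
  have h := (ZMod.intCast_zmod_eq_zero_iff_dvd _ p).2 hdvd
  push_cast at h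
  exact ⟨2 * (u : ZMod p), by linear_combination (-2) * h⟩
end

section
/- Let d be a positive integer which is not a square, let (u₁, v₁) be the fundamental (smallest positive) solution of the Pell equation u² − d v² = 1, and for each positive integer k let (u_k, v_k) be defined by u_k + v_k√d = (u₁ + v₁√d)^k. If q ∈ {2, 3, 5} and q divides u_k for some positive integer k, then q divides u₁. -/
theorem y_dvd_y_pow_aux {d : ℤ} (a : Pell.Solution₁ d) (k : ℕ) : a.y ∣ (a ^ k).y := by
  induction k with
  | zero => simp
  | succ n ih =>
    rw [pow_succ, Pell.Solution₁.y_mul]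
    exact dvd_add (Dvd.intro_left _ rfl) (Dvd.dvd.mul_right ih _)

theorem stmt_11 (d : ℤ) (hd : 0 < d) (hdsq : ¬ IsSquare d)
    (a : Pell.Solution₁ d) (ha : Pell.IsFundamental a)
    (q : ℤ) (hq : q ∈ ({2, 3, 5} : Set ℤ))
    (k : ℕ) (hk : 0 < k) (hdvd : q ∣ (a ^ k).x) : q ∣ a.x := by
  obtain ⟨c, hc⟩ := y_dvd_y_pow_aux a k
  have h1 := a.prop
  have h2 := (a ^ k).prop
  rw [hc] at h2
  have h3 : (a.x ^ 2 - 1) * c ^ 2 = (a ^ k).x ^ 2 - 1 := by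
    linear_combination c ^ 2 * h1 - h2
  have key : ∀ n : ℕ, (∀ u c : ZMod n, (u ^ 2 - 1) * c ^ 2 = 0 ^ 2 - 1 → u = 0) →
      (n : ℤ) ∣ (a ^ k).x → (n : ℤ) ∣ a.x := by
    intro n hn hx
    rw [← ZMod.intCast_zmod_eq_zero_iff_dvd] at hx ⊢
    have h4 := congrArg (Int.cast : ℤ → ZMod n) h3
    push_cast at h4
    rw [hx] at h4
    exact hn _ _ h4
  rcases hq with rfl | rfl | rfl
  · exact key 2 (by decide) hdvd
  · exact key 3 (by decide) hdvd
  · exact key 5 (by decide) hdvd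
end

section
/- Let d be a positive integer which is not a square, let (u₁, v₁) be the fundamental (smallest positive) solution of the Pell equation u² − d v² = 1, and for each positive integer k let (u_k, v_k) be defined by u_k + v_k√d = (u₁ + v₁√d)^k. If r and s are positive integers with 2 dividing u_r and 2 not dividing u_s, then r is odd and s is even. -/
theorem even_pow_x {d : ℤ} (a : Pell.Solution₁ d) (k : ℕ) : ¬ 2 ∣ (a ^ (k + k)).x := by
  rw [pow_add, Pell.Solution₁.x_mul]
  have h := (a ^ k).prop_y
  have e : (a ^ k).x * (a ^ k).x + d * ((a ^ k).y * (a ^ k).y) = 2 * (a ^ k).x ^ 2 - 1 := by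
    linear_combination h
  rw [e]
  omega

theorem odd_pow_x {d : ℤ} (a : Pell.Solution₁ d) (h : 2 ∣ a.x) (k : ℕ) :
    2 ∣ (a ^ (2 * k + 1)).x := by
  rw [pow_succ, two_mul, pow_add, Pell.Solution₁.x_mul, Pell.Solution₁.y_mul]
  obtain ⟨c, hc⟩ := h
  rw [hc]
  exact ⟨(a ^ k * a ^ k).x * c + d * ((a ^ k).x * (a ^ k).y * a.y), by ring⟩

theorem even_y_pow {d : ℤ} (a : Pell.Solution₁ d) (h : 2 ∣ a.y) (k : ℕ) : 2 ∣ (a ^ k).y := by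
  induction k with
  | zero => simp
  | succ n ih =>
    rw [pow_succ, Pell.Solution₁.y_mul]
    exact dvd_add (Dvd.dvd.mul_left h _) (Dvd.dvd.mul_right ih _)

theorem stmt_12 (d : ℤ) (hd : 0 < d) (hdsq : ¬ IsSquare d)
    (a : Pell.Solution₁ d) (ha : Pell.IsFundamental a)
    (r s : ℕ) (hr : 0 < r) (hs : 0 < s)
    (hur : 2 ∣ (a ^ r).x) (hus : ¬ 2 ∣ (a ^ s).x) :
    Odd r ∧ Even s := by
  have hp := (a ^ r).prop
  have hdy : ¬ 2 ∣ d * (a ^ r).y ^ 2 := by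
    intro h
    have h2 : (2 : ℤ) ∣ (a ^ r).x ^ 2 := dvd_pow hur two_ne_zero
    omega
  have hd2 : ¬ 2 ∣ d := fun h => hdy (Dvd.dvd.mul_right h _)
  have hy1 : ¬ 2 ∣ a.y := fun h =>
    hdy (Dvd.dvd.mul_left (dvd_pow (even_y_pow a h r) two_ne_zero) _)
  have hx1 : 2 ∣ a.x := by
    have h1 := a.prop
    by_contra hx
    have e := congrArg (fun z : ℤ => Even z) h1
    simp only [← even_iff_two_dvd] at *
    simp [Int.even_sub, Int.even_mul, Int.even_pow, hx, hd2, hy1] at e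
  constructor
  · by_contra h
    obtain ⟨k, rfl⟩ := Nat.not_odd_iff_even.mp h
    exact even_pow_x a k hur
  · by_contra h
    obtain ⟨k, rfl⟩ := Nat.not_even_iff_odd.mp h
    exact hus (odd_pow_x a hx1 k)
end

section
/- Let a and b be integers with a > 1, b > 1, a ≡ 2 (mod 3) and b ≡ 0 (mod 3). If positive integers n and x satisfy (a^n − 1)(b^n − 1) = x², then n is even. -/
theorem stmt_15 (a b : ℤ) (ha : 1 < a) (hb : 1 < b)
    (ha3 : a % 3 = 2) (hb3 : b % 3 = 0)
    (n : ℕ) (x : ℤ) (hn : 0 < n) (hx : 0 < x)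
    (h : (a ^ n - 1) * (b ^ n - 1) = x ^ 2) : Even n := by
  by_contra hne
  have hodd : Odd n := Nat.not_even_iff_odd.mp hne
  have h1 : a ≡ -1 [ZMOD 3] := by
    unfold Int.ModEq
    omega
  have h2 : b ≡ 0 [ZMOD 3] := by
    unfold Int.ModEq
    omega
  have h3 := h1.pow n
  have h4 := h2.pow n
  rw [hodd.neg_one_pow] at h3
  rw [zero_pow hn.ne'] at h4
  have h5 := (h3.sub_right 1).mul (h4.sub_right 1)
  rw [h] at h5
  have h6 : x % 3 = 0 ∨ x % 3 = 1 ∨ x % 3 = 2 := by omega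
  rcases h6 with h6 | h6 | h6 <;> simp [Int.ModEq, pow_two, Int.mul_emod, h6] at h5
end
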